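/- arXiv:1310.4313 — 2 statements merged into one kernel-verified Lean document; each statement's English description precedes it below -/
import Mathlib

section
/- Let S be a Hausdorff topological space with a jointly continuous associative multiplication (a topological semigroup). Suppose 0 ∈ S satisfies x·0 = 0 for all x ∈ S, the set G = S ∖ {0} is closed under multiplication, and G is a group under the induced multiplication. If S is pseudocompact, then 0 is an isolated point of S. -/
/-- A topological space is pseudocompact if every locally finite family of non-empty
open subsets is finite. -/
def IsPseudocompact (X : Type*) [TopologicalSpace X] : Prop :=
  ∀ 𝒰 : Set (Set X), (∀ U ∈ 𝒰, IsOpen U ∧ U.Nonempty) →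
    LocallyFinite (fun U : 𝒰 => (U : Set X)) → 𝒰.Finite

/-!
Unless `G = {e}`, the point `z` is a two-sided zero, so `S` is a group with zero whose
multiplication, but not a priori inversion, is continuous. Pseudocompactness makes up for this: for
every neighbourhood `U` of `1`, the inverses of all points near `1` lie in `closure U`. Otherwise
there are `h n → 1`, fast, with `(h n)⁻¹ ∉ closure U`, and the small neighbourhoods of the partial
products `h 0 * ⋯ * h (n - 1)` accumulate at some `x ≠ 0`; comparing two consecutive partial
products through `x` puts some `(h n)⁻¹` into `closure U`.

If `0` were not isolated, choose nonzero `g n` near `0` with `g n * (g m)⁻¹` near `0` for `m < n`,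
and a small neighbourhood `V` of `1`. The open sets `(g n)⁻¹ V` accumulate at some `x ≠ 0`, so there
are `m < n` and points `s ∈ (g m)⁻¹ V`, `t ∈ (g n)⁻¹ V` close to `x`. Then
`g n * t = (g n * (g m)⁻¹) * (g m * s) * (s⁻¹ * t)` is close to `1` by its left-hand side, and close
to `0` by its right-hand side, since `s⁻¹ * t` is in the closure of a small neighbourhood of `1`.
-/

open Filter Set TopologicalSpace
open scoped Pointwise Topology

namespace IsPseudocompact

variable {X ι : Type*} [TopologicalSpace X] {A : ι → Set X}

theorem finite_of_locallyFinite (hX : IsPseudocompact X) (hAo : ∀ i, IsOpen (A i))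
    (hAne : ∀ i, (A i).Nonempty) (hA : LocallyFinite A) : Finite ι := by
  have hrange : (range A).Finite :=
    hX _ (forall_mem_range.2 fun i ↦ ⟨hAo i, hAne i⟩) hA.on_range
  refine finite_univ_iff.1 (Finite.of_finite_fibers A (image_univ ▸ hrange) ?_)
  rintro _ ⟨i, -, rfl⟩
  obtain ⟨x, hx⟩ := hAne i
  refine (hA.point_finite x).subset ?_
  rintro j ⟨-, hj : A j = A i⟩
  exact hj.superset hx

theorem exists_forall_nhds_infinite [Infinite ι] (hX : IsPseudocompact X)
    (hAo : ∀ i, IsOpen (A i)) (hAne : ∀ i, (A i).Nonempty) :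
    ∃ x, ∀ O ∈ 𝓝 x, {i | (A i ∩ O).Nonempty}.Infinite := by
  by_contra! hcon
  exact not_finite_iff_infinite.2 ‹_› (hX.finite_of_locallyFinite hAo hAne hcon)

theorem exists_forall_mem_closure_of_antitone (hX : IsPseudocompact X) {A B : ℕ → Set X}
    (hA : Antitone A) (hBA : ∀ n, B n ⊆ A n) (hBo : ∀ n, IsOpen (B n))
    (hBne : ∀ n, (B n).Nonempty) :
    ∃ x, (∀ n, x ∈ closure (A n)) ∧ ∀ O ∈ 𝓝 x, ∃ n, (B n ∩ O).Nonempty := by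
  obtain ⟨x, hx⟩ := hX.exists_forall_nhds_infinite hBo hBne
  refine ⟨x, fun n ↦ mem_closure_iff_nhds.2 fun O hO ↦ ?_, fun O hO ↦ (hx O hO).nonempty⟩
  obtain ⟨k, ⟨s, hsB, hsO⟩, hnk⟩ := (hx O hO).exists_gt n
  exact ⟨s, hsO, hA hnk.le (hBA k hsB)⟩

end IsPseudocompact

theorem exists_mem_nhds_notMem_closure {X : Type*} [TopologicalSpace X] [T2Space X] {x y : X}
    (hxy : x ≠ y) : ∃ U ∈ 𝓝 y, x ∉ closure U := by
  obtain ⟨P, Q, hP, hQ, hxP, hyQ, hPQ⟩ := t2_separation hxy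
  exact ⟨Q, hQ.mem_nhds hyQ, (hPQ.closure_right hP).notMem_of_mem_left hxP⟩

theorem exists_seq_openNhdsOf_one_mul_subset {M : Type*} [MulOneClass M] [TopologicalSpace M]
    [ContinuousMul M] {U : Set M} (hU : U ∈ 𝓝 (1 : M)) :
    ∃ V : ℕ → OpenNhdsOf (1 : M),
      (V 0 : Set M) ⊆ U ∧ ∀ n, (V (n + 1) : Set M) * V (n + 1) ⊆ V n := by
  have half (V : OpenNhdsOf (1 : M)) : ∃ W : OpenNhdsOf (1 : M), (W : Set M) * W ⊆ V := by
    obtain ⟨W, hWo, hW1, hWV⟩ := exists_open_nhds_one_mul_subset (V.isOpen.mem_nhds V.mem)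
    exact ⟨⟨⟨W, hWo⟩, hW1⟩, hWV⟩
  choose next hnext using half
  obtain ⟨V₀, -, hV₀⟩ := (OpenNhdsOf.basis_nhds (x := (1 : M))).mem_iff.1 hU
  refine ⟨fun n ↦ next^[n] V₀, hV₀, fun n ↦ ?_⟩
  simpa only [Function.iterate_succ_apply'] using hnext _

theorem antitone_preimage_inv_mul {S : Type*} [GroupWithZero S] {V : ℕ → Set S}
    (hV : ∀ n, V (n + 1) * V (n + 1) ⊆ V n) {y : ℕ → S} (hy0 : ∀ n, y n ≠ 0)
    (hy : ∀ n, (y n)⁻¹ * y (n + 1) ∈ V (n + 1)) :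
    Antitone fun n ↦ ((y n)⁻¹ * ·) ⁻¹' V n := by
  refine antitone_nat_of_succ_le fun n s hs ↦ ?_
  have hprod : (y n)⁻¹ * y (n + 1) * ((y (n + 1))⁻¹ * s) ∈ V n := hV n (mul_mem_mul (hy n) hs)
  rwa [mul_assoc, mul_inv_cancel_left₀ (hy0 _)] at hprod

theorem exists_seq_mul_inv_mem_nhds_zero {S : Type*} [GroupWithZero S] [TopologicalSpace S]
    [SeparatelyContinuousMul S] [(𝓝[≠] (0 : S)).NeBot] {W : Set S} (hW : W ∈ 𝓝 (0 : S)) :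
    ∃ g : ℕ → S, (∀ n, g n ∈ W ∧ g n ≠ 0) ∧ ∀ m n, m < n → g n * (g m)⁻¹ ∈ W := by
  refine exists_seq_of_forall_finset_exists (fun g ↦ g ∈ W ∧ g ≠ 0) (fun a b ↦ b * a⁻¹ ∈ W) ?_
  intro F _
  have hmul (a : S) : ∀ᶠ b in 𝓝 (0 : S), b * a⁻¹ ∈ W :=
    (continuous_mul_const a⁻¹).tendsto' 0 0 (zero_mul _) hW
  have hev : ∀ᶠ b in 𝓝 (0 : S), b ∈ W ∧ ∀ a ∈ F, b * a⁻¹ ∈ W :=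
    (eventually_mem_set.2 hW).and ((eventually_all_finset F).2 fun a _ ↦ hmul a)
  obtain ⟨b, ⟨hbW, hbF⟩, hb0⟩ :=
    ((hev.filter_mono nhdsWithin_le_nhds).and (eventually_mem_nhdsWithin (s := {0}ᶜ))).exists
  exact ⟨b, ⟨hbW, hb0⟩, hbF⟩

theorem exists_nhds_zero_open_nhds_one_disjoint {M : Type*} [MonoidWithZero M] [Nontrivial M]
    [TopologicalSpace M] [ContinuousMul M] [T2Space M] :
    ∃ W ∈ 𝓝 (0 : M), ∃ V : Set M, IsOpen V ∧ 1 ∈ V ∧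
      Disjoint (W * W) V ∧ Disjoint (W * V * V) V := by
  obtain ⟨U, Q, hU, hQ, h0U, h1Q, hUQ⟩ := t2_separation (zero_ne_one (α := M))
  have hU0 (a : M) : U ∈ 𝓝 (0 * a) := by
    rw [zero_mul]
    exact hU.mem_nhds h0U
  obtain ⟨W₁, hW₁, W₂, hW₂, hWW⟩ := mem_mul.1 (le_nhds_mul 0 0 (hU0 0))
  obtain ⟨W₃, hW₃, V₁, hV₁, hWV⟩ := mem_mul.1 (le_nhds_mul 0 1 (hU0 1))
  obtain ⟨V, hVo, h1V, hVV⟩ := exists_open_nhds_one_mul_subset hV₁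
  refine ⟨W₁ ∩ W₂ ∩ W₃, inter_mem (inter_mem hW₁ hW₂) hW₃, V ∩ Q, hVo.inter hQ, ⟨h1V, h1Q⟩,
    hUQ.mono ?_ inter_subset_right, hUQ.mono ?_ inter_subset_right⟩
  · exact (mul_subset_mul (fun _ h ↦ h.1.1) fun _ h ↦ h.1.2).trans hWW
  · rw [mul_assoc]
    exact (mul_subset_mul inter_subset_right
      ((mul_subset_mul inter_subset_left inter_subset_left).trans hVV)).trans hWV

section GroupWithZero

variable {S : Type*} [GroupWithZero S] [TopologicalSpace S]

theorem IsPseudocompact.exists_inv_mul_mem_closure [SeparatelyContinuousMul S]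
    (hS : IsPseudocompact S) {V : ℕ → OpenNhdsOf (1 : S)}
    (hV : ∀ n, (V (n + 1) : Set S) * V (n + 1) ⊆ V n) (hV0 : 0 ∉ closure (V 0 : Set S))
    {y : ℕ → S} (hy0 : ∀ n, y n ≠ 0) (hy : ∀ n, (y n)⁻¹ * y (n + 1) ∈ V (n + 1)) :
    ∃ n, (y (n + 1))⁻¹ * y n ∈ closure (V 0 : Set S) := by
  by_contra! hcon
  let A (n : ℕ) : Set S := ((y n)⁻¹ * ·) ⁻¹' V n
  have hA : Antitone A := antitone_preimage_inv_mul hV hy0 hy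
  let B (n : ℕ) : Set S := A n ∩ ((y (n + 1))⁻¹ * ·) ⁻¹' (closure (V 0))ᶜ
  have hBo (n : ℕ) : IsOpen (B n) :=
    ((V n).isOpen.preimage (continuous_const_mul _)).inter
      (isClosed_closure.isOpen_compl.preimage (continuous_const_mul _))
  have hyB (n : ℕ) : y n ∈ B n := by
    refine ⟨?_, hcon n⟩
    simpa only [A, mem_preimage, inv_mul_cancel₀ (hy0 n), SetLike.mem_coe] using (V n).mem
  obtain ⟨x, hxA, hxB⟩ := hS.exists_forall_mem_closure_of_antitone hA (fun _ ↦ inter_subset_left)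
    hBo fun n ↦ ⟨y n, hyB n⟩
  have hx0 : x ≠ 0 := by
    rintro rfl
    have h := map_mem_closure (continuous_const_mul (y 0)⁻¹) (hxA 0) fun _ hs ↦ hs
    exact hV0 (by rwa [mul_zero] at h)
  have hxV : ∀ᶠ s in 𝓝 x, x⁻¹ * s ∈ V 1 :=
    (continuous_const_mul x⁻¹).tendsto' x 1 (inv_mul_cancel₀ hx0)
      ((V 1).isOpen.mem_nhds (V 1).mem)
  obtain ⟨m, s, hsB, hsx⟩ := hxB _ hxV
  have hV1 : (V (m + 1) : Set S) ⊆ V 1 :=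
    antitone_nat_of_succ_le (f := fun n ↦ (V (n + 1) : Set S))
      (fun n ↦ (subset_mul_left _ (V (n + 2)).mem).trans (hV (n + 1))) (Nat.zero_le m)
  have hclosure : (y (m + 1))⁻¹ * x * (x⁻¹ * s) ∈ closure (V 0 : Set S) :=
    map_mem_closure (f := fun t ↦ (y (m + 1))⁻¹ * t * (x⁻¹ * s)) (by fun_prop) (hxA (m + 1))
      fun t ht ↦ hV 0 (mul_mem_mul (hV1 ht) hsx)
  rw [mul_assoc, mul_inv_cancel_left₀ hx0] at hclosure
  exact hsB.2 hclosure

variable [ContinuousMul S] [T2Space S]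

theorem IsPseudocompact.eventually_inv_mem_closure (hS : IsPseudocompact S) {U : Set S}
    (hU : U ∈ 𝓝 (1 : S)) : ∀ᶠ h in 𝓝 (1 : S), h⁻¹ ∈ closure U := by
  by_contra hfreq
  obtain ⟨Q, hQ, h0Q⟩ := exists_mem_nhds_notMem_closure (zero_ne_one (α := S))
  obtain ⟨V, hVUQ, hV⟩ := exists_seq_openNhdsOf_one_mul_subset (inter_mem hU hQ)
  have hbad (n : ℕ) : ∃ h : S, h⁻¹ ∉ closure U ∧ h ∈ V (n + 1) ∧ h ≠ 0 :=
    ((not_eventually.1 hfreq).and_eventually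
      (((V (n + 1)).isOpen.eventually_mem (V (n + 1)).mem).and
        (isOpen_ne.eventually_mem one_ne_zero))).exists
  choose h hhU hhV hh0 using hbad
  let y (n : ℕ) : S := ((List.range n).map h).prod
  have hy0 (n : ℕ) : y n ≠ 0 := List.prod_ne_zero (by simp [hh0])
  have hysucc (n : ℕ) : y (n + 1) = y n * h n := List.prod_range_succ h n
  have hy (n : ℕ) : (y n)⁻¹ * y (n + 1) ∈ V (n + 1) := by
    rw [hysucc, inv_mul_cancel_left₀ (hy0 n)]
    exact hhV n
  obtain ⟨n, hn⟩ := hS.exists_inv_mul_mem_closure hV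
    (fun h0 ↦ h0Q (closure_mono (hVUQ.trans inter_subset_right) h0)) hy0 hy
  rw [hysucc, mul_inv_rev, inv_mul_cancel_right₀ (hy0 n)] at hn
  exact hhU n (closure_mono (hVUQ.trans inter_subset_left) hn)

theorem IsPseudocompact.eventually_inv_mul_mem_closure (hS : IsPseudocompact S) {x : S}
    (hx : x ≠ 0) {U : Set S} (hU : U ∈ 𝓝 (1 : S)) :
    ∀ᶠ p in 𝓝 x ×ˢ 𝓝 x, p.1⁻¹ * p.2 ∈ closure U := by
  obtain ⟨V, hVo, h1V, hVU⟩ := exists_open_nhds_one_mul_subset hU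
  have hV : V ∈ 𝓝 (1 : S) := hVo.mem_nhds h1V
  have hlim : Tendsto (x⁻¹ * ·) (𝓝 x) (𝓝 1) :=
    (continuous_const_mul x⁻¹).tendsto' x 1 (inv_mul_cancel₀ hx)
  filter_upwards [(hlim.eventually (hS.eventually_inv_mem_closure hV)).prod_mk (hlim hV)]
    with p ⟨hp₁, hp₂⟩
  have hp : (x⁻¹ * p.1)⁻¹ * (x⁻¹ * p.2) ∈ closure U :=
    closure_mono hVU (smul_set_closure_subset V V (mul_mem_mul hp₁ (subset_closure hp₂)))
  rwa [mul_inv_rev, inv_inv, mul_assoc, mul_inv_cancel_left₀ hx] at hp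

theorem IsPseudocompact.isOpen_singleton_zero (hS : IsPseudocompact S) :
    IsOpen ({0} : Set S) := by
  rw [isOpen_singleton_iff_punctured_nhds]
  by_contra hne
  have : (𝓝[≠] (0 : S)).NeBot := ⟨hne⟩
  obtain ⟨W, hW, V, hVo, h1V, hWW, hWVV⟩ := exists_nhds_zero_open_nhds_one_disjoint (M := S)
  obtain ⟨g, hg, hgW⟩ := exists_seq_mul_inv_mem_nhds_zero hW
  obtain ⟨x, hx⟩ := hS.exists_forall_nhds_infinite (A := fun n ↦ (g n * ·) ⁻¹' V)
    (fun n ↦ hVo.preimage (continuous_const_mul (g n)))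
    fun n ↦ ⟨(g n)⁻¹, by rwa [mem_preimage, mul_inv_cancel₀ (hg n).2]⟩
  have hx0 : x ≠ 0 := by
    rintro rfl
    obtain ⟨n, s, hsV, hsW⟩ := (hx W hW).nonempty
    exact hWW.notMem_of_mem_left (mul_mem_mul (hg n).1 hsW) hsV
  obtain ⟨O, hO, hOV⟩ := mem_prod_self_iff.1
    (hS.eventually_inv_mul_mem_closure hx0 (hVo.mem_nhds h1V))
  obtain ⟨m, s, hsV, hsO, hs0⟩ := (hx _ (inter_mem hO (isOpen_ne.mem_nhds hx0))).nonempty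
  obtain ⟨n, ⟨t, htV, htO⟩, hmn⟩ := (hx O hO).exists_gt m
  have hst : s⁻¹ * t ∈ closure V := hOV (mk_mem_prod hsO htO)
  have hfactor : g n * t = g n * (g m)⁻¹ * (g m * s) * (s⁻¹ * t) := by
    rw [mul_assoc (g n), inv_mul_cancel_left₀ (hg m).2, mul_assoc, mul_inv_cancel_left₀ hs0]
  have hclosure : g n * t ∈ closure (W * V * V) := by
    rw [hfactor]
    exact smul_set_closure_subset (W * V) V
      (mul_mem_mul (subset_closure (mul_mem_mul (hgW m n hmn) hsV)) hst)
  exact (hWVV.closure_left hVo).notMem_of_mem_left hclosure htV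

end GroupWithZero

theorem left_zero_of_right_zero {S : Type*} [Semigroup S] {z e g : S} (hz : ∀ x, x * z = z)
    (hinv : ∀ x ≠ z, ∃ y, x * y = e) (hg : g * e = g) (hge : g ≠ e) (x : S) : z * x = z := by
  by_contra hne
  obtain ⟨y, hy⟩ := hinv _ hne
  refine hge ?_
  calc g = g * (z * x * y) := by rw [hy, hg]
    _ = z * x * y := by simp only [← mul_assoc, hz]
    _ = e := hy

/-- If `S` is a Hausdorff topological semigroup (jointly continuous
associative multiplication), `z` is a right zero, `G = S \ {z}` is a subgroup, and
`S` is pseudocompact, then `z` is an isolated point of `S`. -/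
theorem stmt_3 {S : Type*} [TopologicalSpace S] [T2Space S]
    (mul : S → S → S)
    (assoc : ∀ a b c : S, mul (mul a b) c = mul a (mul b c))
    (contMul : Continuous fun p : S × S => mul p.1 p.2)
    (z : S) (hz : ∀ x : S, mul x z = z)
    (G : Set S) (hG : G = {x : S | x ≠ z})
    (hGmul : ∀ x ∈ G, ∀ y ∈ G, mul x y ∈ G)
    (e : S) (he : e ∈ G)
    (hidl : ∀ x ∈ G, mul e x = x) (hidr : ∀ x ∈ G, mul x e = x)
    (hinv : ∀ x ∈ G, ∃ y ∈ G, mul x y = e ∧ mul y x = e)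
    (hpc : IsPseudocompact S) :
    IsOpen ({z} : Set S) := by
  subst hG
  by_cases htriv : ∀ x ≠ z, x = e
  · have : Finite S := finite_univ_iff.1 <|
      (toFinite {z, e}).subset fun x _ ↦ (eq_or_ne x z).imp_right (htriv x)
    exact isOpen_discrete _
  · push Not at htriv
    obtain ⟨g, hgz, hge⟩ := htriv
    let _ : Semigroup S := { mul, mul_assoc := assoc }
    have hzl : ∀ x, mul z x = z := left_zero_of_right_zero hz
      (fun x hx ↦ (hinv x hx).imp fun _ hy ↦ hy.2.1) (hidr g hgz) hge
    let _ : MonoidWithZero S :=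
      { one := e
        one_mul x := (eq_or_ne x z).elim (fun h ↦ h ▸ hz e) (hidl x)
        mul_one x := (eq_or_ne x z).elim (fun h ↦ h ▸ hzl e) (hidr x)
        zero := z
        zero_mul := hzl
        mul_zero := hz }
    have : Nontrivial S := ⟨e, z, he⟩
    let _ : GroupWithZero S := groupWithZeroOfIsUnitOrEqZero fun x ↦
      (ne_or_eq x z).imp_left fun hx ↦ let ⟨y, _, hxy, hyx⟩ := hinv x hx; ⟨⟨x, y, hxy, hyx⟩, rfl⟩
    have : ContinuousMul S := ⟨contMul⟩
    exact hpc.isOpen_singleton_zero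
end

section
/- Let (S,τ_S) be a Hausdorff topological monoid with zero 0_S (identity 1_S ≠ 0_S, jointly continuous multiplication), let Λ be a nonempty index set, and let τ_B be a topology on the Brandt Λ⁰-extension B⁰_Λ(S) such that (B⁰_Λ(S),τ_B) is a Hausdorff topological semigroup and for some α ∈ Λ the natural map h_α : S → B⁰_Λ(S), defined by h_α(s) = (α,s,α) for s ≠ 0_S and h_α(0_S) = 0, is a homeomorphism of (S,τ_S) onto the subspace (S)_{α,α}. Then (B⁰_Λ(S),τ_B) is pseudocompact if and only if Λ is finite and (S,τ_S) is pseudocompact. -/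
/-- The underlying set of the Brandt `Λ`⁰-extension `B⁰_Λ(S)` of a semigroup `S` with
zero: `none` is the zero and a non-zero element is a triple `(α, s, β)` with `s` a
non-zero element of `S` and `α, β ∈ Λ`. -/
abbrev BExtZ (Λ : Type u) (S : Type v) [Zero S] :=
  Option (Λ × {s : S // s ≠ 0} × Λ)

open Classical in
/-- The multiplication of the Brandt `Λ`⁰-extension `B⁰_Λ(S)`:
`(α,a,β)·(γ,b,δ) = (α,ab,δ)` if `β = γ` and `ab ≠ 0`, and `= 0` otherwise; `0` is a
two-sided zero. -/
noncomputable def bMulZ {Λ : Type u} {S : Type v} [SemigroupWithZero S] :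
    BExtZ Λ S → BExtZ Λ S → BExtZ Λ S
  | some (α, a, β), some (γ, b, δ) =>
      if β = γ then
        if hzero : a.1 * b.1 = 0 then none
        else some (α, ⟨a.1 * b.1, hzero⟩, δ)
      else none
  | _, _ => none

open Classical in
/-- The natural map `h_α : S → B⁰_Λ(S)` sending `0` to the zero and a non-zero `s` to
`(α, s, α)`; its image is the subset `(S)_{α,α}`. -/
noncomputable def bNat {Λ : Type u} {S : Type v} [Zero S] (α : Λ) (s : S) :
    BExtZ Λ S :=
  if h : s = 0 then none else some (α, ⟨s, h⟩, α)

/-!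
Write `e_{γδ} = (γ, 1, δ)`. Each map `x ↦ e_{aγ} x e_{δb}` is continuous, carries the block
`(S)_{γ,δ}` bijectively onto `(S)_{a,b}`, and sends everything else to `0`. Hence the nonzero part
of every block is open, `(S)_{α,α}` is a continuous image of `B⁰_Λ(S)`, and `B⁰_Λ(S)` is a union of
`|Λ|²` continuous images of `(S)_{α,α}`. As pseudocompactness passes to finite unions of continuous
images, only the finiteness of `Λ` remains.

Choose neighbourhoods `G` of `e_{αα}` and `V` of `0` with `G·G` disjoint from `V·V`, and let
`T_{γδ}` be the open set of all `(γ, s, δ)` with `(α, s, α) ∈ G`. The `T_{γδ}` lie in distinct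
blocks, so those that miss `V` form a locally finite family, and by pseudocompactness there are only
finitely many of them. On the other hand `(α, s, γ)(γ, t, α) = (α, s, α)(α, t, α)`, so for every `γ`
at least one of `T_{αγ}` and `T_{γα}` misses `V`.
-/

open Topology Set

section Topology

variable {X Y : Type*} [TopologicalSpace X] [TopologicalSpace Y]

namespace IsPseudocompact

theorem finite_of_locallyFinite_s11 {ι : Type*} (hX : IsPseudocompact X) {f : ι → Set X}
    (hopen : ∀ i, IsOpen (f i)) (hne : ∀ i, (f i).Nonempty) (hf : LocallyFinite f) :
    Finite ι := by
  have hrange : (range f).Finite :=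
    hX _ (forall_mem_range.2 fun i => ⟨hopen i, hne i⟩) hf.on_range
  have hfiber : ∀ U ∈ range f, {i | f i = U}.Finite := by
    rintro _ ⟨i, rfl⟩
    obtain ⟨x, hx⟩ := hne i
    exact (hf.point_finite x).subset fun j (hj : f j = f i) => hj.symm.subset hx
  refine finite_univ_iff.1 ((hrange.biUnion hfiber).subset fun i _ => ?_)
  exact mem_biUnion (mem_range_self i) rfl

theorem of_iUnion_range_eq_univ {ι : Type*} [Finite ι] {X : ι → Type*}
    [∀ i, TopologicalSpace (X i)] (hX : ∀ i, IsPseudocompact (X i)) {f : ∀ i, X i → Y}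
    (hf : ∀ i, Continuous (f i)) (hcover : ⋃ i, range (f i) = univ) : IsPseudocompact Y := by
  intro 𝒰 h𝒰 hlf
  have hfin : ∀ i, {U : 𝒰 | (f i ⁻¹' U).Nonempty}.Finite := fun i =>
    (hX i).finite_of_locallyFinite_s11
      (f := fun U : {U : 𝒰 | (f i ⁻¹' U).Nonempty} => f i ⁻¹' (U : 𝒰))
      (fun U => (h𝒰 _ U.1.2).1.preimage (hf i)) (fun U => U.2)
      ((hlf.preimage_continuous (hf i)).comp_injective Subtype.val_injective)
  refine finite_univ_iff.1 ((finite_iUnion hfin).subset fun U _ => ?_)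
  obtain ⟨y, hy⟩ := (h𝒰 U U.2).2
  obtain ⟨i, x, rfl⟩ := mem_iUnion.1 (hcover ▸ mem_univ y)
  exact mem_iUnion.2 ⟨i, x, hy⟩

theorem of_surjective (hX : IsPseudocompact X) {f : X → Y} (hf : Continuous f)
    (hsurj : Function.Surjective f) : IsPseudocompact Y :=
  of_iUnion_range_eq_univ (ι := Unit) (fun _ => hX) (fun _ => hf)
    (by rw [iUnion_const, hsurj.range_eq])

theorem of_isEmbedding_of_range_eq {Z : Type*} [TopologicalSpace Z] (hX : IsPseudocompact X)
    {f : X → Z} (hf : Continuous f) {e : Y → Z} (he : IsEmbedding e) (h : range f = range e) :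
    IsPseudocompact Y := by
  have hrange : IsPseudocompact (range f) :=
    hX.of_surjective hf.rangeFactorization rangeFactorization_surjective
  rw [h] at hrange
  exact hrange.of_surjective he.toHomeomorph.symm.continuous he.toHomeomorph.symm.surjective

theorem finite_setOf_disjoint {κ : Type*} (hX : IsPseudocompact X) {z : X} {W T : κ → Set X}
    (hW : ∀ k, IsOpen (W k)) (hdisj : Pairwise (Function.onFun Disjoint W))
    (hcover : {z}ᶜ ⊆ ⋃ k, W k) (hTW : ∀ k, T k ⊆ W k) (hT : ∀ k, IsOpen (T k))
    (hne : ∀ k, (T k).Nonempty) {V : Set X} (hV : V ∈ 𝓝 z) : {k | Disjoint (T k) V}.Finite := by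
  refine hX.finite_of_locallyFinite_s11 (f := fun k : {k | Disjoint (T k) V} => T k)
    (fun k => hT k) (fun k => hne k) fun x => ?_
  by_cases hx : x = z
  · refine ⟨V, hx ▸ hV, finite_empty.subset fun k hk => ?_⟩
    exact (not_disjoint_iff_nonempty_inter.2 hk) k.2
  · obtain ⟨j, hj⟩ := mem_iUnion.1 (hcover hx)
    have eq_of_meets : ∀ k, (T k ∩ W j).Nonempty → k = j := fun k hk =>
      hdisj.eq (not_disjoint_iff_nonempty_inter.2 (hk.mono (inter_subset_inter_left _ (hTW k))))
    refine ⟨W j, (hW j).mem_nhds hj, Subsingleton.finite fun k hk l hl => Subtype.ext ?_⟩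
    exact (eq_of_meets k hk).trans (eq_of_meets l hl).symm

end IsPseudocompact

theorem exists_open_nhds_disjoint_image_square [T2Space Y] {f : X × X → Y} (hf : Continuous f)
    {x y : X} (h : f (x, x) ≠ f (y, y)) :
    ∃ U V : Set X, IsOpen U ∧ IsOpen V ∧ x ∈ U ∧ y ∈ V ∧
      Disjoint (f '' U ×ˢ U) (f '' V ×ˢ V) := by
  obtain ⟨P, Q, hP, hQ, hxP, hyQ, hPQ⟩ := t2_separation h
  obtain ⟨U, hU, hxU, hUP⟩ := exists_nhds_square ((hP.preimage hf).mem_nhds hxP)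
  obtain ⟨V, hV, hyV, hVQ⟩ := exists_nhds_square ((hQ.preimage hf).mem_nhds hyQ)
  exact ⟨U, V, hU, hV, hxU, hyV, hPQ.mono (image_subset_iff.2 hUP) (image_subset_iff.2 hVQ)⟩

end Topology

namespace BExtZ

variable {Λ S : Type*}

section Block

variable [Zero S]

/-- The nonzero part `(S)_{γ,δ} ∖ {0}` of a block of `B⁰_Λ(S)`. The zero, common to all blocks, is
left out so that different blocks are disjoint. -/
def block (γ δ : Λ) : Set (BExtZ Λ S) :=
  range fun s : {s : S // s ≠ 0} => some (γ, s, δ)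

theorem pairwise_disjoint_block :
    Pairwise (Function.onFun Disjoint fun p : Λ × Λ => block (S := S) p.1 p.2) := by
  intro p q hpq
  refine disjoint_left.2 ?_
  rintro _ ⟨s, rfl⟩ ⟨t, ht⟩
  simp only [Option.some.injEq, Prod.mk.injEq] at ht
  exact hpq (Prod.ext ht.1.symm ht.2.2.symm)

theorem compl_none_subset_iUnion_block :
    {none}ᶜ ⊆ ⋃ p : Λ × Λ, block (S := S) p.1 p.2 := by
  rintro (_ | ⟨γ, s, δ⟩) hx
  · exact absurd rfl hx
  · exact mem_iUnion.2 ⟨(γ, δ), s, rfl⟩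

theorem bNat_zero (α : Λ) : bNat α (0 : S) = none := by
  simp [bNat]

theorem bNat_coe (α : Λ) (s : {s : S // s ≠ 0}) : bNat α (s : S) = some (α, s, α) := by
  simp [bNat, s.2]

theorem range_bNat (α : Λ) : range (bNat (S := S) α) = insert none (block α α) := by
  refine Subset.antisymm (range_subset_iff.2 fun s => ?_) (insert_subset_iff.2 ⟨?_, ?_⟩)
  · by_cases hs : s = 0
    · exact Or.inl (by rw [hs, bNat_zero])
    · exact Or.inr ⟨⟨s, hs⟩, (bNat_coe α ⟨s, hs⟩).symm⟩
  · exact ⟨0, bNat_zero α⟩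
  · rintro _ ⟨s, rfl⟩
    exact ⟨s, bNat_coe α s⟩

end Block

section Sandwich

variable [MonoidWithZero S] [NeZero (1 : S)]

/-- The matrix unit `e_{γδ} = (γ, 1, δ)`; multiplication by matrix units moves elements between
blocks. -/
def matrixUnit (γ δ : Λ) : BExtZ Λ S :=
  some (γ, ⟨1, one_ne_zero⟩, δ)

/-- The map `x ↦ e_{aγ} x e_{δb}`, which carries the block `(S)_{γ,δ}` onto `(S)_{a,b}` and sends
all other elements to `0`. -/
noncomputable def sandwich (a γ δ b : Λ) (x : BExtZ Λ S) : BExtZ Λ S :=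
  bMulZ (bMulZ (matrixUnit a γ) x) (matrixUnit δ b)

theorem sandwich_none (a γ δ b : Λ) : sandwich a γ δ b (none : BExtZ Λ S) = none :=
  rfl

theorem sandwich_some (a γ δ b : Λ) (s : {s : S // s ≠ 0}) :
    sandwich a γ δ b (some (γ, s, δ)) = some (a, s, b) := by
  simp [sandwich, matrixUnit, bMulZ, s.2]

theorem sandwich_matrixUnit (a γ δ b : Λ) :
    sandwich a γ δ b (matrixUnit γ δ : BExtZ Λ S) = matrixUnit a b :=
  sandwich_some a γ δ b _

theorem sandwich_of_notMem_block {a γ δ b : Λ} {x : BExtZ Λ S} (hx : x ∉ block γ δ) :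
    sandwich a γ δ b x = none := by
  rcases x with _ | ⟨c, s, d⟩
  · exact sandwich_none a γ δ b
  · by_cases hc : γ = c
    · have hd : d ≠ δ := by
        rintro rfl
        exact hx ⟨s, by rw [hc]⟩
      simp [sandwich, matrixUnit, bMulZ, s.2, hc, hd]
    · simp [sandwich, matrixUnit, bMulZ, hc]

theorem preimage_sandwich_subset_block {a γ δ b : Λ} {G : Set (BExtZ Λ S)} (hG : none ∉ G) :
    sandwich a γ δ b ⁻¹' G ⊆ block γ δ :=
  fun _ hx => by_contra fun h => hG (sandwich_of_notMem_block h ▸ hx)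

theorem preimage_sandwich_compl_none (a γ δ b : Λ) :
    sandwich a γ δ b ⁻¹' {none}ᶜ = block (S := S) γ δ := by
  refine (preimage_sandwich_subset_block (by simp)).antisymm ?_
  rintro _ ⟨s, rfl⟩
  simp [sandwich_some]

theorem range_sandwich (a γ δ b : Λ) :
    range (sandwich (S := S) a γ δ b) = insert none (block a b) := by
  refine Subset.antisymm (range_subset_iff.2 fun x => ?_) (insert_subset_iff.2 ⟨?_, ?_⟩)
  · by_cases hx : x ∈ block γ δ
    · obtain ⟨s, rfl⟩ := hx
      exact Or.inr ⟨s, (sandwich_some a γ δ b s).symm⟩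
    · exact Or.inl (sandwich_of_notMem_block hx)
  · exact ⟨none, sandwich_none a γ δ b⟩
  · rintro _ ⟨s, rfl⟩
    exact ⟨some (γ, s, δ), sandwich_some a γ δ b s⟩

theorem iUnion_range_sandwich_comp_bNat (α : Λ) :
    ⋃ p : Λ × Λ, range (sandwich (S := S) p.1 α α p.2 ∘ bNat α) = univ := by
  refine eq_univ_of_forall fun x => mem_iUnion.2 ?_
  rcases x with _ | ⟨a, s, b⟩
  · exact ⟨(α, α), 0, by rw [Function.comp_apply, bNat_zero, sandwich_none]⟩
  · exact ⟨(a, b), s, by rw [Function.comp_apply, bNat_coe, sandwich_some]⟩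

theorem bMulZ_sandwich_sandwich {α γ δ κ : Λ} {x y : BExtZ Λ S}
    (hx : x ∈ block α γ) (hy : y ∈ block γ δ) :
    bMulZ (sandwich α α γ κ x) (sandwich κ γ δ δ y) = bMulZ x y := by
  obtain ⟨s, rfl⟩ := hx
  obtain ⟨t, rfl⟩ := hy
  simp [sandwich_some, bMulZ]

variable [TopologicalSpace (BExtZ Λ S)]

theorem continuous_sandwich
    (hmul : Continuous fun p : BExtZ Λ S × BExtZ Λ S => bMulZ p.1 p.2) (a γ δ b : Λ) :
    Continuous (sandwich (S := S) a γ δ b) := by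
  have hleft : Continuous fun x : BExtZ Λ S => bMulZ (matrixUnit a γ) x :=
    hmul.comp (continuous_const.prodMk continuous_id)
  exact hmul.comp (hleft.prodMk continuous_const)

theorem isOpen_block [T1Space (BExtZ Λ S)]
    (hmul : Continuous fun p : BExtZ Λ S × BExtZ Λ S => bMulZ p.1 p.2) (γ δ : Λ) :
    IsOpen (block (S := S) γ δ) := by
  rw [← preimage_sandwich_compl_none γ γ δ δ]
  exact isOpen_compl_singleton.preimage (continuous_sandwich hmul γ γ δ δ)

theorem finite_setOf_disjoint_preimage_sandwich [T1Space (BExtZ Λ S)]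
    (hmul : Continuous fun p : BExtZ Λ S × BExtZ Λ S => bMulZ p.1 p.2)
    (hB : IsPseudocompact (BExtZ Λ S)) {a b : Λ} {G V : Set (BExtZ Λ S)} (hG : IsOpen G)
    (hGunit : matrixUnit a b ∈ G) (hGnone : none ∉ G) (hV : V ∈ 𝓝 none) :
    {p : Λ × Λ | Disjoint (sandwich a p.1 p.2 b ⁻¹' G) V}.Finite := by
  have hne : ∀ p : Λ × Λ, (sandwich a p.1 p.2 b ⁻¹' G).Nonempty := fun p =>
    ⟨matrixUnit p.1 p.2, by rwa [mem_preimage, sandwich_matrixUnit]⟩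
  exact hB.finite_setOf_disjoint (fun p : Λ × Λ => isOpen_block hmul p.1 p.2)
    pairwise_disjoint_block compl_none_subset_iUnion_block
    (fun _ => preimage_sandwich_subset_block hGnone)
    (fun p => hG.preimage (continuous_sandwich hmul a p.1 p.2 b)) hne hV

theorem finite_index_of_isPseudocompact [T2Space (BExtZ Λ S)]
    (hmul : Continuous fun p : BExtZ Λ S × BExtZ Λ S => bMulZ p.1 p.2)
    (hB : IsPseudocompact (BExtZ Λ S)) : Finite Λ := by
  rcases isEmpty_or_nonempty Λ with _ | ⟨⟨α⟩⟩
  · infer_instance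
  have hne : bMulZ (matrixUnit α α) (matrixUnit α α) ≠ bMulZ none (none : BExtZ Λ S) := by
    simp [matrixUnit, bMulZ]
  obtain ⟨G, V, hG, hV, hGunit, hVnone, hdisj⟩ :=
    exists_open_nhds_disjoint_image_square hmul hne
  have hmul_ne : ∀ x ∈ G, ∀ y ∈ G, ∀ v ∈ V, ∀ w ∈ V, bMulZ x y ≠ bMulZ v w :=
    fun x hx y hy v hv w hw => disjoint_iff_forall_ne.1 hdisj
      (mem_image_of_mem _ (mk_mem_prod hx hy)) (mem_image_of_mem _ (mk_mem_prod hv hw))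
  have hGnone : none ∉ G := fun h => hmul_ne _ h _ h _ hVnone _ hVnone rfl
  let T : Λ × Λ → Set (BExtZ Λ S) := fun p => sandwich α p.1 p.2 α ⁻¹' G
  have hfin : {p | Disjoint (T p) V}.Finite :=
    finite_setOf_disjoint_preimage_sandwich hmul hB hG hGunit hGnone (hV.mem_nhds hVnone)
  have hmiss : ∀ γ, Disjoint (T (α, γ)) V ∨ Disjoint (T (γ, α)) V := by
    intro γ
    by_contra! h
    obtain ⟨x, hxT, hxV⟩ := not_disjoint_iff.1 h.1
    obtain ⟨y, hyT, hyV⟩ := not_disjoint_iff.1 h.2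
    exact hmul_ne _ hxT _ hyT _ hxV _ hyV
      (bMulZ_sandwich_sandwich (preimage_sandwich_subset_block hGnone hxT)
        (preimage_sandwich_subset_block hGnone hyT))
  refine finite_univ_iff.1 (((hfin.image Prod.snd).union (hfin.image Prod.fst)).subset ?_)
  exact fun γ _ => (hmiss γ).imp (fun h => ⟨(α, γ), h, rfl⟩) fun h => ⟨(γ, α), h, rfl⟩

end Sandwich

end BExtZ

/-- Let `(S,τ_S)` be a Hausdorff topological monoid with zero
(`1 ≠ 0`), and let the Brandt `Λ`⁰-extension `B⁰_Λ(S)` carry a Hausdorff topology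
with jointly continuous multiplication such that for some `α ∈ Λ` the natural map
`h_α : S → B⁰_Λ(S)` is a homeomorphism onto the subspace `(S)_{α,α}` (that is, a
topological embedding).  Then `B⁰_Λ(S)` is pseudocompact if and only if `Λ` is
finite and `S` is pseudocompact. -/
theorem stmt_11 {Λ : Type u} {S : Type v} [Nonempty Λ] [MonoidWithZero S]
    (hone : (1 : S) ≠ 0)
    [TopologicalSpace S] [T2Space S]
    (contMulS : Continuous fun p : S × S => p.1 * p.2)
    [TopologicalSpace (BExtZ Λ S)] [T2Space (BExtZ Λ S)]
    (contMul : Continuous fun p : BExtZ Λ S × BExtZ Λ S => bMulZ p.1 p.2)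
    (α : Λ) (hembed : Topology.IsEmbedding (bNat (Λ := Λ) (S := S) α)) :
    IsPseudocompact (BExtZ Λ S) ↔ (Finite Λ ∧ IsPseudocompact S) := by
  have : NeZero (1 : S) := ⟨hone⟩
  constructor
  · intro hB
    refine ⟨BExtZ.finite_index_of_isPseudocompact contMul hB, ?_⟩
    exact hB.of_isEmbedding_of_range_eq (BExtZ.continuous_sandwich contMul α α α α) hembed
      ((BExtZ.range_sandwich α α α α).trans (BExtZ.range_bNat α).symm)
  · rintro ⟨_, hS⟩
    exact IsPseudocompact.of_iUnion_range_eq_univ (fun _ : Λ × Λ => hS)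
      (fun p => (BExtZ.continuous_sandwich contMul p.1 α α p.2).comp hembed.continuous)
      (BExtZ.iUnion_range_sandwich_comp_bNat α)
end
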